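/- The function φ₁(x) = ∫₀^∞ η(t) e^{-κ(b-x)t} dt satisfies the ordinary differential equation ρ φ₁(x) - a(b - x) φ₁'(x) - (σ²/2) φ₁''(x) = 0 for all x ∈ ℝ. -/

import Mathlib

open MeasureTheory Real Set

/-! Write `J s c = ∫₀^∞ t ^ s * exp (-β * t ^ 2) * exp (c * t)` for `s > -1`. Differentiating in `c`
raises the exponent, so `(J s)' = J (s + 1)`, while the `t`-derivative of the integrand of
`J (s + 1)` integrates to zero, which reads `(s + 1) * J s + c * J (s + 1) = 2 * β * J (s + 2)`.
Hence `J s` solves `2 * β * y'' = c * y' + (s + 1) * y`. For `β = 1 / 2` and `s = ρ / a - 1`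
the substitution `c = κ * (x - b)` with `σ ^ 2 * κ ^ 2 = 2 * a` turns this into the ODE for `φ₁`. -/

lemma deriv_comp_mul_sub_const {𝕜 F : Type*} [NontriviallyNormedField 𝕜] [NormedAddCommGroup F]
    [NormedSpace 𝕜 F] (f : 𝕜 → F) (k b : 𝕜) :
    deriv (fun x ↦ f (k * (x - b))) = fun x ↦ k • deriv f (k * (x - b)) := by
  funext x
  rw [deriv_comp_sub_const (f := fun y ↦ f (k * y)), deriv_comp_mul_left]

lemma neg_mul_sq_add_mul_le {β : ℝ} (hβ : 0 < β) (c t : ℝ) :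
    -β * t ^ 2 + c * t ≤ c ^ 2 / (2 * β) + -(β / 2) * t ^ 2 := by
  have complete_square : c ^ 2 / (2 * β) + -(β / 2) * t ^ 2 - (-β * t ^ 2 + c * t)
      = (β * t - c) ^ 2 / (2 * β) := by
    field_simp
    ring
  have : 0 ≤ (β * t - c) ^ 2 / (2 * β) := by positivity
  linarith

/-- The integrand of `hermiteIntegral`. The real power is meaningful only for `t ≥ 0`. -/
noncomputable def hermiteKernel (β s c t : ℝ) : ℝ :=
  t ^ s * exp (-β * t ^ 2) * exp (c * t)

/-- The integral representing Hermite functions of negative degree (equivalently, parabolic cylinder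
functions) as functions of `c`: for `β = 1 / 2` it is `Γ(s + 1) * exp (c ^ 2 / 4) * D_{-s-1}(-c)`.
It converges for `β > 0` and `s > -1`; the normalising constant is left out. -/
noncomputable def hermiteIntegral (β s c : ℝ) : ℝ :=
  ∫ t in Ioi (0 : ℝ), hermiteKernel β s c t

section HermiteKernel

variable {β s c t : ℝ}

lemma measurable_hermiteKernel (β s c : ℝ) : Measurable (hermiteKernel β s c) := by
  unfold hermiteKernel
  fun_prop

lemma continuous_hermiteKernel (β c : ℝ) (hs : 0 ≤ s) : Continuous (hermiteKernel β s c) := by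
  have : Continuous fun t : ℝ ↦ t ^ s := continuous_rpow_const hs
  unfold hermiteKernel
  fun_prop

lemma hermiteKernel_apply_zero (β c : ℝ) (hs : s ≠ 0) : hermiteKernel β s c 0 = 0 := by
  simp [hermiteKernel, zero_rpow hs]

lemma hermiteKernel_nonneg (β s c : ℝ) (ht : 0 ≤ t) : 0 ≤ hermiteKernel β s c t := by
  unfold hermiteKernel
  positivity

lemma hermiteKernel_add_one (β s c : ℝ) (ht : t ≠ 0) :
    hermiteKernel β (s + 1) c t = hermiteKernel β s c t * t := by
  simp only [hermiteKernel, rpow_add_one ht]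
  ring

lemma hermiteKernel_le_hermiteKernel {c' : ℝ} (β s : ℝ) (hc : c ≤ c') (ht : 0 ≤ t) :
    hermiteKernel β s c t ≤ hermiteKernel β s c' t := by
  unfold hermiteKernel
  gcongr

lemma hermiteKernel_le (hβ : 0 < β) (s c : ℝ) (ht : 0 ≤ t) :
    hermiteKernel β s c t ≤ exp (c ^ 2 / (2 * β)) * (t ^ s * exp (-(β / 2) * t ^ 2)) :=
  calc hermiteKernel β s c t = t ^ s * exp (-β * t ^ 2 + c * t) := by
        rw [hermiteKernel, exp_add, mul_assoc]
    _ ≤ t ^ s * exp (c ^ 2 / (2 * β) + -(β / 2) * t ^ 2) := by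
        gcongr t ^ s * exp ?_
        exact neg_mul_sq_add_mul_le hβ c t
    _ = exp (c ^ 2 / (2 * β)) * (t ^ s * exp (-(β / 2) * t ^ 2)) := by
        rw [exp_add, mul_left_comm]

lemma integrableOn_hermiteKernel (hβ : 0 < β) (hs : -1 < s) (c : ℝ) :
    IntegrableOn (hermiteKernel β s c) (Ioi 0) := by
  refine ((integrableOn_rpow_mul_exp_neg_mul_sq (half_pos hβ) hs).const_mul
    (exp (c ^ 2 / (2 * β)))).mono' (measurable_hermiteKernel β s c).aestronglyMeasurable ?_
  filter_upwards [ae_restrict_mem measurableSet_Ioi] with t (ht : 0 < t)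
  rw [norm_of_nonneg (hermiteKernel_nonneg β s c ht.le)]
  exact hermiteKernel_le hβ s c ht.le

lemma hasDerivAt_hermiteKernel_param (β s c : ℝ) (ht : t ≠ 0) :
    HasDerivAt (fun c ↦ hermiteKernel β s c t) (hermiteKernel β (s + 1) c t) c := by
  refine ((hasDerivAt_mul_const t).exp.const_mul (t ^ s * exp (-β * t ^ 2))).congr_deriv ?_
  rw [hermiteKernel_add_one β s c ht, hermiteKernel, ← mul_assoc]

lemma hasDerivAt_hermiteKernel (β s c : ℝ) (ht : t ≠ 0) :
    HasDerivAt (hermiteKernel β s c)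
      (s * hermiteKernel β (s - 1) c t + c * hermiteKernel β s c t
        - 2 * β * hermiteKernel β (s + 1) c t) t := by
  have hpow : HasDerivAt (fun t : ℝ ↦ t ^ s) (s * t ^ (s - 1)) t :=
    hasDerivAt_rpow_const (Or.inl ht)
  have hgauss : HasDerivAt (fun t ↦ exp (-β * t ^ 2)) (exp (-β * t ^ 2) * (-β * (2 * t))) t := by
    simpa using ((hasDerivAt_pow 2 t).const_mul (-β)).exp
  have hexp : HasDerivAt (fun t ↦ exp (c * t)) (exp (c * t) * c) t :=
    (hasDerivAt_const_mul c).exp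
  refine ((hpow.mul hgauss).mul hexp).congr_deriv ?_
  rw [hermiteKernel_add_one β s c ht]
  simp only [hermiteKernel, Pi.mul_apply]
  ring

end HermiteKernel

section HermiteIntegral

variable {β s : ℝ}

lemma hasDerivAt_hermiteIntegral (hβ : 0 < β) (hs : -1 < s) (c : ℝ) :
    HasDerivAt (hermiteIntegral β s) (hermiteIntegral β (s + 1) c) c := by
  refine (hasDerivAt_integral_of_dominated_loc_of_deriv_le
    (F' := hermiteKernel β (s + 1)) (bound := hermiteKernel β (s + 1) (c + 1))
    (Iio_mem_nhds (lt_add_one c))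
    (.of_forall fun c' ↦ (measurable_hermiteKernel β s c').aestronglyMeasurable)
    (integrableOn_hermiteKernel hβ hs c)
    (measurable_hermiteKernel β (s + 1) c).aestronglyMeasurable ?_
    (integrableOn_hermiteKernel hβ (by linarith) (c + 1)) ?_).2
  · filter_upwards [ae_restrict_mem measurableSet_Ioi] with t (ht : 0 < t) c' (hc' : c' < c + 1)
    rw [norm_of_nonneg (hermiteKernel_nonneg β (s + 1) c' ht.le)]
    exact hermiteKernel_le_hermiteKernel β (s + 1) hc'.le ht.le
  · filter_upwards [ae_restrict_mem measurableSet_Ioi] with t (ht : 0 < t) c' _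
    exact hasDerivAt_hermiteKernel_param β s c' ht.ne'

lemma deriv_hermiteIntegral (hβ : 0 < β) (hs : -1 < s) :
    deriv (hermiteIntegral β s) = hermiteIntegral β (s + 1) :=
  funext fun c ↦ (hasDerivAt_hermiteIntegral hβ hs c).deriv

lemma hermiteIntegral_recurrence (hβ : 0 < β) (hs : 0 < s) (c : ℝ) :
    s * hermiteIntegral β (s - 1) c + c * hermiteIntegral β s c
      = 2 * β * hermiteIntegral β (s + 1) c := by
  have hint₀ := (integrableOn_hermiteKernel hβ (by linarith : -1 < s - 1) c).const_mul s
  have hint := integrableOn_hermiteKernel hβ (by linarith : -1 < s) c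
  have hint₁ := hint.const_mul c
  have hint₂ := (integrableOn_hermiteKernel hβ (by linarith : -1 < s + 1) c).const_mul (2 * β)
  have hderiv := fun t (ht : t ∈ Ioi (0 : ℝ)) ↦ hasDerivAt_hermiteKernel β s c (ne_of_gt ht)
  have hint₀₁ := hint₀.fun_add hint₁
  have hderiv_int := hint₀₁.sub hint₂
  have integral_deriv_eq_zero : ∫ t in Ioi (0 : ℝ), (s * hermiteKernel β (s - 1) c t
      + c * hermiteKernel β s c t - 2 * β * hermiteKernel β (s + 1) c t) = 0 := by
    have := integral_Ioi_of_hasDerivAt_of_tendsto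
      (continuous_hermiteKernel β c hs.le).continuousWithinAt hderiv hderiv_int
      (tendsto_zero_of_hasDerivAt_of_integrableOn_Ioi hderiv hderiv_int hint)
    rwa [hermiteKernel_apply_zero β c hs.ne', sub_zero] at this
  rw [integral_sub hint₀₁ hint₂, integral_add hint₀ hint₁] at integral_deriv_eq_zero
  simp only [integral_const_mul] at integral_deriv_eq_zero
  exact sub_eq_zero.mp integral_deriv_eq_zero

theorem two_mul_deriv_deriv_hermiteIntegral (hβ : 0 < β) (hs : -1 < s) (c : ℝ) :
    2 * β * deriv (deriv (hermiteIntegral β s)) c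
      = c * deriv (hermiteIntegral β s) c + (s + 1) * hermiteIntegral β s c := by
  have hrec := hermiteIntegral_recurrence hβ (by linarith : 0 < s + 1) c
  rw [add_sub_cancel_right] at hrec
  rw [deriv_hermiteIntegral hβ hs, deriv_hermiteIntegral hβ (by linarith : -1 < s + 1), ← hrec,
    add_comm]

end HermiteIntegral

theorem stmt_3 (a ρ σ b : ℝ) (ha : 0 < a) (hρ : 0 < ρ) (hσ : 0 < σ)
    (κ : ℝ) (hκ : κ = Real.sqrt (2 * a) / σ)
    (η : ℝ → ℝ) (hη : ∀ t, η t = t ^ (ρ / a - 1) * Real.exp (-t ^ 2 / 2))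
    (φ₁ : ℝ → ℝ)
    (hφ₁ : ∀ x, φ₁ x = ∫ t in Ioi (0 : ℝ), η t * Real.exp (-(κ * (b - x)) * t)) :
    ∀ x : ℝ,
      ρ * φ₁ x - a * (b - x) * deriv φ₁ x - σ ^ 2 / 2 * deriv (deriv φ₁) x = 0 := by
  intro x
  have hκσ : σ ^ 2 * κ ^ 2 = 2 * a := by
    rw [hκ, div_pow, sq_sqrt (by positivity)]
    field_simp
  have haρ : a * (ρ / a) = ρ := mul_div_cancel₀ ρ ha.ne'
  have hs : -1 < ρ / a - 1 := by linarith [div_pos hρ ha]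
  set y := hermiteIntegral (1 / 2) (ρ / a - 1)
  have hφ : φ₁ = fun x ↦ y (κ * (x - b)) := by
    funext x
    simp only [hφ₁, hη, y, hermiteIntegral, hermiteKernel]
    congr! 5 <;> ring
  have hφ' : deriv φ₁ = fun x ↦ κ * deriv y (κ * (x - b)) := by
    simp only [hφ, deriv_comp_mul_sub_const, smul_eq_mul]
  have hφ'' : deriv (deriv φ₁) x = κ * (κ * deriv (deriv y) (κ * (x - b))) := by
    simp only [hφ', deriv_const_mul_field, deriv_comp_mul_sub_const, smul_eq_mul]
  have hode := two_mul_deriv_deriv_hermiteIntegral one_half_pos hs (κ * (x - b))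
  rw [hφ'', hφ', hφ]
  linear_combination (-a) * hode - deriv (deriv y) (κ * (x - b)) / 2 * hκσ
    - y (κ * (x - b)) * haρ
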